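/- First variation formula: for any smooth maps α, β : ℝ × [0,1] → 𝔤, the energy E(ε) = (1/2)∫₀¹ ⟨α(ε,t), α(ε,t)⟩ dt satisfies E'(ε) = ⟨β(ε,1), α(ε,1)⟩ - ⟨β(ε,0), α(ε,0)⟩ - ∫₀¹ ⟨β(ε,t), ∇_t α(ε,t)⟩ dt - ∫₀¹ ⟨Δ(α,β)(ε,t), α(ε,t)⟩ dt. -/

import Mathlib

/-!
Differentiating under the integral sign, `E' = ∫ ⟪∂_ε α, α⟫`. The Koszul formula on the diagonal
gives `⟪β, D_α α⟫ = -⟪[α, β], α⟫`, so the bracket in `Δ(α, β)` cancels the algebraic part of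
`∇_t α`, leaving the pointwise identity `⟪∂_ε α, α⟫ = ∂_t ⟪β, α⟫ - ⟪β, ∇_t α⟫ - ⟪Δ(α, β), α⟫`;
the total `t`-derivative integrates to the boundary terms.
-/

open scoped InnerProductSpace

/-- Partial derivative in the second variable `t` of a map `ℝ² → G`. -/
noncomputable def partialT {G : Type*} [NormedAddCommGroup G] [NormedSpace ℝ G]
    (f : ℝ × ℝ → G) (p : ℝ × ℝ) : G :=
  fderiv ℝ f p (0, 1)

/-- Partial derivative in the first variable `ε` of a map `ℝ² → G`. -/
noncomputable def partialE {G : Type*} [NormedAddCommGroup G] [NormedSpace ℝ G]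
    (f : ℝ × ℝ → G) (p : ℝ × ℝ) : G :=
  fderiv ℝ f p (1, 0)

open MeasureTheory Metric
open scoped Interval

theorem hasDerivAt_intervalIntegral_of_continuous_deriv {𝕜 E : Type*} [RCLike 𝕜]
    [NormedAddCommGroup E] [NormedSpace ℝ E] [NormedSpace 𝕜 E]
    {μ : Measure ℝ} [IsLocallyFiniteMeasure μ] {F F' : 𝕜 → ℝ → E}
    (hF : ∀ x, Continuous (F x)) (hF' : Continuous fun p : 𝕜 × ℝ => F' p.1 p.2)
    (hderiv : ∀ x t, HasDerivAt (fun y => F y t) (F' x t) x) (a b : ℝ) (x₀ : 𝕜) :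
    HasDerivAt (fun x => ∫ t in a..b, F x t ∂μ) (∫ t in a..b, F' x₀ t ∂μ) x₀ := by
  obtain ⟨C, hC⟩ := ((isCompact_closedBall x₀ 1).prod
    (isCompact_uIcc (a := a) (b := b))).exists_bound_of_continuousOn hF'.continuousOn
  have hbound (t : ℝ) (ht : t ∈ Ι a b) (x : 𝕜) (hx : x ∈ closedBall x₀ 1) : ‖F' x t‖ ≤ C :=
    hC (x, t) ⟨hx, Set.uIoc_subset_uIcc ht⟩
  exact (intervalIntegral.hasDerivAt_integral_of_dominated_loc_of_deriv_le
    (closedBall_mem_nhds x₀ one_pos)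
    (.of_forall fun x => (hF x).aestronglyMeasurable)
    ((hF x₀).intervalIntegrable a b)
    (hF'.comp (Continuous.prodMk_right x₀)).aestronglyMeasurable
    (.of_forall hbound) intervalIntegrable_const
    (.of_forall fun t _ x _ => hderiv x t)).2

section PartialDerivatives

variable {E : Type*} [NormedAddCommGroup E] [NormedSpace ℝ E] {f : ℝ × ℝ → E}

theorem hasDerivAt_partialE {e t : ℝ} (hf : DifferentiableAt ℝ f (e, t)) :
    HasDerivAt (fun x => f (x, t)) (partialE f (e, t)) e :=
  hf.hasFDerivAt.comp_hasDerivAt e ((hasDerivAt_id e).prodMk (hasDerivAt_const e t))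

theorem hasDerivAt_partialT {e t : ℝ} (hf : DifferentiableAt ℝ f (e, t)) :
    HasDerivAt (fun x => f (e, x)) (partialT f (e, t)) t :=
  hf.hasFDerivAt.comp_hasDerivAt t ((hasDerivAt_const t e).prodMk (hasDerivAt_id t))

theorem continuous_partialE (hf : ContDiff ℝ 1 f) : Continuous (partialE f) :=
  (hf.continuous_fderiv one_ne_zero).clm_apply continuous_const

theorem continuous_partialT (hf : ContDiff ℝ 1 f) : Continuous (partialT f) :=
  (hf.continuous_fderiv one_ne_zero).clm_apply continuous_const

theorem hasDerivAt_intervalIntegral_partialE {μ : Measure ℝ} [IsLocallyFiniteMeasure μ]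
    (hf : ContDiff ℝ 1 f) (a b ε : ℝ) :
    HasDerivAt (fun e => ∫ t in a..b, f (e, t) ∂μ) (∫ t in a..b, partialE f (ε, t) ∂μ) ε :=
  hasDerivAt_intervalIntegral_of_continuous_deriv
    (fun e => hf.continuous.comp (Continuous.prodMk_right e)) (continuous_partialE hf)
    (fun _ _ => hasDerivAt_partialE (hf.differentiable one_ne_zero _)) a b ε

theorem intervalIntegral_partialT [CompleteSpace E] (hf : ContDiff ℝ 1 f) (a b ε : ℝ) :
    ∫ t in a..b, partialT f (ε, t) = f (ε, b) - f (ε, a) :=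
  intervalIntegral.integral_eq_sub_of_hasDerivAt
    (fun _ _ => hasDerivAt_partialT (hf.differentiable one_ne_zero _))
    (((continuous_partialT hf).comp (Continuous.prodMk_right ε)).intervalIntegrable a b)

end PartialDerivatives

section FirstVariation

variable {G : Type*} [NormedAddCommGroup G] [InnerProductSpace ℝ G]
  {lie D : G →ₗ[ℝ] G →ₗ[ℝ] G} {α β : ℝ × ℝ → G}

theorem partialE_inner_self {p : ℝ × ℝ} (hα : DifferentiableAt ℝ α p) :
    partialE (fun q => ⟪α q, α q⟫_ℝ) p = 2 * ⟪partialE α p, α p⟫_ℝ := by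
  simp only [partialE, fderiv_inner_apply ℝ hα hα, real_inner_comm (α p)]
  ring

theorem partialT_inner {p : ℝ × ℝ} (hβ : DifferentiableAt ℝ β p) (hα : DifferentiableAt ℝ α p) :
    partialT (fun q => ⟪β q, α q⟫_ℝ) p = ⟪β p, partialT α p⟫_ℝ + ⟪partialT β p, α p⟫_ℝ :=
  fderiv_inner_apply ℝ hβ hα (0, 1)

/-- The energy `E(e) = ½ ∫ₐᵇ ⟪α(e,t), α(e,t)⟫ dt` of the path `t ↦ α(e,t)` on `[a, b]`. -/
noncomputable def energy (α : ℝ × ℝ → G) (a b e : ℝ) : ℝ :=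
  (1 / 2 : ℝ) * ∫ t in a..b, ⟪α (e, t), α (e, t)⟫_ℝ

theorem hasDerivAt_energy (hα : ContDiff ℝ 1 α) (a b ε : ℝ) :
    HasDerivAt (energy α a b) (∫ t in a..b, ⟪partialE α (ε, t), α (ε, t)⟫_ℝ) ε := by
  refine ((hasDerivAt_intervalIntegral_partialE (hα.inner ℝ hα) a b ε).const_mul
    (1 / 2 : ℝ)).congr_deriv ?_
  simp only [partialE_inner_self (hα.differentiable one_ne_zero _),
    intervalIntegral.integral_const_mul]
  ring

/-- The Koszul formula, characterizing `D` as the Levi-Civita product of the bracket `lie`. -/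
def IsLeviCivitaProduct (lie D : G →ₗ[ℝ] G →ₗ[ℝ] G) : Prop :=
  ∀ u v w : G, 2 * ⟪D u v, w⟫_ℝ = ⟪lie u v, w⟫_ℝ + ⟪lie w u, v⟫_ℝ + ⟪lie w v, u⟫_ℝ

theorem IsLeviCivitaProduct.inner_apply_self (hD : IsLeviCivitaProduct lie D) (hlie : lie.IsAlt)
    (u v : G) : ⟪v, D u u⟫_ℝ = -⟪lie u v, u⟫_ℝ := by
  have koszul := hD u u v
  rw [hlie.self_eq_zero, inner_zero_left, ← hlie.neg u v, inner_neg_left] at koszul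
  rw [real_inner_comm]
  linarith

/-- The covariant derivative `∇_t α = ∂_t α + D_α α` of `α` along its own `t`-curves. -/
noncomputable def covDerivT (D : G →ₗ[ℝ] G →ₗ[ℝ] G) (α : ℝ × ℝ → G) (p : ℝ × ℝ) : G :=
  partialT α p + D (α p) (α p)

/-- The defect `Δ(α, β) = ∂_t β - ∂_ε α + [α, β]`, which vanishes exactly when the `𝔤`-valued
one-form `α dt + β dε` satisfies the Maurer-Cartan equation. -/
noncomputable def maurerCartanDefect (lie : G →ₗ[ℝ] G →ₗ[ℝ] G) (α β : ℝ × ℝ → G)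
    (p : ℝ × ℝ) : G :=
  partialT β p - partialE α p + lie (α p) (β p)

theorem IsLeviCivitaProduct.inner_covDerivT (hD : IsLeviCivitaProduct lie D) (hlie : lie.IsAlt)
    (α β : ℝ × ℝ → G) (p : ℝ × ℝ) :
    ⟪β p, covDerivT D α p⟫_ℝ = ⟪β p, partialT α p⟫_ℝ - ⟪lie (α p) (β p), α p⟫_ℝ := by
  rw [covDerivT, inner_add_right, hD.inner_apply_self hlie, sub_eq_add_neg]

theorem IsLeviCivitaProduct.inner_partialE_eq (hD : IsLeviCivitaProduct lie D) (hlie : lie.IsAlt)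
    {p : ℝ × ℝ} (hα : DifferentiableAt ℝ α p) (hβ : DifferentiableAt ℝ β p) :
    ⟪partialE α p, α p⟫_ℝ = partialT (fun q => ⟪β q, α q⟫_ℝ) p
      - ⟪β p, covDerivT D α p⟫_ℝ - ⟪maurerCartanDefect lie α β p, α p⟫_ℝ := by
  rw [partialT_inner hβ hα, hD.inner_covDerivT hlie, maurerCartanDefect, inner_add_left,
    inner_sub_left]
  ring

theorem IsLeviCivitaProduct.continuous_inner_covDerivT (hD : IsLeviCivitaProduct lie D)
    (hlie : lie.IsAlt) (hlie_cont : Continuous fun p : G × G => lie p.1 p.2)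
    (hα : ContDiff ℝ 1 α) (hβ : Continuous β) :
    Continuous fun p => ⟪β p, covDerivT D α p⟫_ℝ := by
  simp only [hD.inner_covDerivT hlie]
  exact (hβ.inner (continuous_partialT hα)).sub
    ((hlie_cont.comp (hα.continuous.prodMk hβ)).inner hα.continuous)

theorem continuous_maurerCartanDefect (hlie_cont : Continuous fun p : G × G => lie p.1 p.2)
    (hα : ContDiff ℝ 1 α) (hβ : ContDiff ℝ 1 β) : Continuous (maurerCartanDefect lie α β) :=
  ((continuous_partialT hβ).sub (continuous_partialE hα)).add
    (hlie_cont.comp (hα.continuous.prodMk hβ.continuous))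

theorem first_variation_of_energy_general (hlie : lie.IsAlt)
    (hlie_cont : Continuous fun p : G × G => lie p.1 p.2) (hD : IsLeviCivitaProduct lie D)
    (hα : ContDiff ℝ 1 α) (hβ : ContDiff ℝ 1 β) (a b ε : ℝ) :
    HasDerivAt (energy α a b)
      (⟪β (ε, b), α (ε, b)⟫_ℝ - ⟪β (ε, a), α (ε, a)⟫_ℝ
        - (∫ t in a..b, ⟪β (ε, t), covDerivT D α (ε, t)⟫_ℝ)
        - ∫ t in a..b, ⟪maurerCartanDefect lie α β (ε, t), α (ε, t)⟫_ℝ)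
      ε := by
  have slice_integrable {f : ℝ × ℝ → ℝ} (hf : Continuous f) :
      IntervalIntegrable (fun t => f (ε, t)) volume a b :=
    (hf.comp (Continuous.prodMk_right ε)).intervalIntegrable a b
  have hpair := slice_integrable (continuous_partialT (hβ.inner ℝ hα))
  have hcov := slice_integrable
    (hD.continuous_inner_covDerivT hlie hlie_cont hα hβ.continuous)
  have hdefect := slice_integrable
    ((continuous_maurerCartanDefect hlie_cont hα hβ).inner hα.continuous)
  refine (hasDerivAt_energy hα a b ε).congr_deriv ?_
  rw [← intervalIntegral_partialT (hβ.inner ℝ hα), ← intervalIntegral.integral_sub hpair hcov,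
    ← intervalIntegral.integral_sub (hpair.sub hcov) hdefect]
  exact intervalIntegral.integral_congr fun t _ => hD.inner_partialE_eq hlie
    (hα.differentiable one_ne_zero _) (hβ.differentiable one_ne_zero _)

end FirstVariation

/-- **first variation formula.** For any smooth maps `α β : ℝ × [0,1] → 𝔤`,
the energy `E ε = ½ ∫₀¹ ⟪α(ε,t), α(ε,t)⟫ dt` satisfies
`E' ε = ⟪β(ε,1), α(ε,1)⟫ - ⟪β(ε,0), α(ε,0)⟫ - ∫₀¹ ⟪β(ε,t), ∇ₜα(ε,t)⟫ dt
        - ∫₀¹ ⟪Δ(α,β)(ε,t), α(ε,t)⟫ dt`,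
where `∇ₜ α = ∂ₜ α + D_α α` and `Δ(α,β) = ∂ₜ β - ∂_ε α + [α,β]`. -/
theorem first_variation_of_energy
    {G : Type*} [NormedAddCommGroup G] [InnerProductSpace ℝ G] [FiniteDimensional ℝ G]
    (lie : G →ₗ[ℝ] G →ₗ[ℝ] G)
    (hanti : ∀ u : G, lie u u = 0)
    (hjac : ∀ u v w : G, lie u (lie v w) = lie (lie u v) w + lie v (lie u w))
    (D : G →ₗ[ℝ] G →ₗ[ℝ] G)
    (hD : ∀ u v w : G,
      2 * ⟪D u v, w⟫_ℝ = ⟪lie u v, w⟫_ℝ + ⟪lie w u, v⟫_ℝ + ⟪lie w v, u⟫_ℝ)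
    (α β : ℝ × ℝ → G) (hα : ContDiff ℝ (⊤ : ℕ∞) α) (hβ : ContDiff ℝ (⊤ : ℕ∞) β) :
    ∀ ε : ℝ,
      HasDerivAt (fun e : ℝ => (1 / 2 : ℝ) * ∫ t in (0 : ℝ)..1, ⟪α (e, t), α (e, t)⟫_ℝ)
        (⟪β (ε, 1), α (ε, 1)⟫_ℝ - ⟪β (ε, 0), α (ε, 0)⟫_ℝ
          - (∫ t in (0 : ℝ)..1,
              ⟪β (ε, t), partialT α (ε, t) + D (α (ε, t)) (α (ε, t))⟫_ℝ)
          - ∫ t in (0 : ℝ)..1,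
              ⟪partialT β (ε, t) - partialE α (ε, t) + lie (α (ε, t)) (β (ε, t)),
                α (ε, t)⟫_ℝ)
        ε := by
  have hlie_cont := lie.toContinuousBilinearMap.continuous₂
  exact first_variation_of_energy_general hanti hlie_cont hD (hα.of_le (mod_cast le_top))
    (hβ.of_le (mod_cast le_top)) 0 1
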